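/- Let k ≥ 2 and e ≥ 1 be integers. In the tensor product R(k,2^e−1) ⊗ R(k,2^e−1) over ZMod 2, the element (z_1·z_2·…·z_{k−1})^{2^{e+1}−1} · z_k^{2^{e+1}−2} is nonzero, where z_i = x_i ⊗ 1 + 1 ⊗ x_i. -/

import Mathlib

/-!
Write `q = 2 ^ e` and `n = m + k`, and let `Δ` denote the Vandermonde determinant.

Let `u_1, …, u_k` and `v_1, …, v_k` be elements of an `𝔽₂`-algebra `B` whose `n`-th powers vanish.
The identity `(x - y) h_d(x, y, l) = h_{d+1}(x, l) - h_{d+1}(y, l)` shows by induction that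
`h_d(u_1, …, u_j) Δ(u_1, …, u_j)` lies in the ideal generated by the `u_i ^ (d + j - 1)`. For the
generators of the flag ideal the exponent is exactly `n`, so each of them annihilates `Δ(u)`. Hence
there is a homomorphism from `R(k,m) ⊗ R(k,m)` to `B / Ann(Δ(u) Δ(v))` with `x_i ⊗ 1 ↦ u_i` and
`1 ⊗ x_i ↦ v_i`, and it suffices to show that
`∏_{i<k} (u_i + v_i)^{2q-1} · (u_k + v_k)^{2q-2} · Δ(u) Δ(v)` is nonzero for one choice of `B`.

That product divides `∏ u_i^{n-1} ∏ v_i^{n-1}`. By Frobenius,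
`(u + v)^{2q-1} = (u^q + v^q) (u + v)^{q-1}`, so `u^{n-1-q} v^{n-q} (u + v)^{2q-1}` equals
`u^{n-1} v^{n-1}`; and `u^{n-1} ∏ (c_i - u) = u^{n-1} ∏ c_i`. So the first pair of variables can be
split off at the cost of one more factor `∏ u_i ∏ v_i` in the remaining variables. The recursion
stops at two pairs of variables, where the product is computed directly.

Finally, `∏ u_i^{n-1} ∏ v_i^{n-1}` is nonzero in the truncated polynomial ring
`𝔽₂[u, v] / (u_i^n, v_i^n)`.
-/

open scoped TensorProduct

/-- Complete homogeneous symmetric polynomial of degree `d` in a list of elements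
of a commutative (semi)ring: `h_d(l)`. -/
noncomputable def completeHomog {R : Type*} [CommSemiring R] : List R → ℕ → R
  | [], 0 => 1
  | [], _ + 1 => 0
  | x :: l, d => ∑ t ∈ Finset.range (d + 1), x ^ t * completeHomog l (d - t)

/-- Elementary symmetric polynomial of degree `d` in a list of elements: `e_d(l)`. -/
noncomputable def elemSymm {R : Type*} [CommSemiring R] : List R → ℕ → R
  | _, 0 => 1
  | [], _ + 1 => 0
  | x :: l, d + 1 => elemSymm l (d + 1) + x * elemSymm l d

/-- The ideal of `(ZMod 2)[x_1, …, x_k]` generated by the complete homogeneous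
symmetric polynomials `h_{m+i}(x_1, …, x_{k+1-i})` for `1 ≤ i ≤ k`. -/
noncomputable def flagIdeal (k m : ℕ) : Ideal (MvPolynomial (Fin k) (ZMod 2)) :=
  Ideal.span { p | ∃ i : ℕ, 1 ≤ i ∧ i ≤ k ∧
    p = completeHomog (((List.finRange k).take (k + 1 - i)).map MvPolynomial.X) (m + i) }

/-- `R(k,m)`, the quotient of `(ZMod 2)[x_1, …, x_k]` by `flagIdeal k m`;
this is the mod-2 cohomology ring of the real flag manifold `F(1^k, m)`. -/
abbrev FlagRing (k m : ℕ) : Type :=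
  MvPolynomial (Fin k) (ZMod 2) ⧸ flagIdeal k m

/-- The image of the variable `x_{j+1}` in `R(k,m)` (`j` is 0-indexed). -/
noncomputable def xGen (k m : ℕ) (j : Fin k) : FlagRing k m :=
  Ideal.Quotient.mk (flagIdeal k m) (MvPolynomial.X j)

/-- The zero-divisor `z_{j+1} = x_{j+1} ⊗ 1 + 1 ⊗ x_{j+1}` in `R(k,m) ⊗ R(k,m)`. -/
noncomputable def zGen (k m : ℕ) (j : Fin k) :
    FlagRing k m ⊗[ZMod 2] FlagRing k m :=
  xGen k m j ⊗ₜ 1 + 1 ⊗ₜ xGen k m j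

/-- `x_{i+1,j+1}` in the `s`-fold tensor power `R(k,m)^{⊗ s}`: the element having
`x_{j+1}` in the `(i+1)`-st tensor factor and `1` elsewhere (`i`, `j` 0-indexed). -/
noncomputable def xT (k m s : ℕ) (i : Fin s) (j : Fin k) :
    ⨂[ZMod 2] _ : Fin s, FlagRing k m :=
  PiTensorProduct.tprod (ZMod 2) (fun t => if t = i then xGen k m j else 1)

/-- The `s`-th zero-divisor `z_{i+1,j+1} = x_{1,j+1} + x_{i+1,j+1}` in `R(k,m)^{⊗ s}`. -/
noncomputable def zT (k m s : ℕ) (hs : 0 < s) (i : Fin s) (j : Fin k) :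
    ⨂[ZMod 2] _ : Fin s, FlagRing k m :=
  xT k m s ⟨0, hs⟩ j + xT k m s i j

section CompleteHomog

variable {R : Type*}

theorem completeHomog_zero [CommSemiring R] (l : List R) : completeHomog l 0 = 1 := by
  induction l with
  | nil => rfl
  | cons x l ih => simp [completeHomog, ih]

theorem completeHomog_cons_succ [CommSemiring R] (x : R) (l : List R) (d : ℕ) :
    completeHomog (x :: l) (d + 1) = completeHomog l (d + 1) + x * completeHomog (x :: l) d := by
  simp only [completeHomog]
  rw [Finset.sum_range_succ', Finset.mul_sum, add_comm]
  simp [pow_succ', mul_assoc]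

theorem completeHomog_singleton [CommSemiring R] (x : R) (d : ℕ) :
    completeHomog [x] d = x ^ d := by
  induction d with
  | zero => simp [completeHomog_zero]
  | succ d ih => rw [completeHomog_cons_succ, ih, completeHomog, zero_add, pow_succ']

theorem map_completeHomog [CommSemiring R] {S F : Type*} [CommSemiring S] [FunLike F R S]
    [RingHomClass F R S] (f : F) (l : List R) (d : ℕ) :
    f (completeHomog l d) = completeHomog (l.map f) d := by
  induction l generalizing d with
  | nil => cases d <;> simp [completeHomog]
  | cons x l ih => simp [completeHomog, ih]

theorem sub_mul_completeHomog_cons_cons [CommRing R] (x y : R) (l : List R) (d : ℕ) :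
    (x - y) * completeHomog (x :: y :: l) d =
      completeHomog (x :: l) (d + 1) - completeHomog (y :: l) (d + 1) := by
  induction d with
  | zero =>
    simp only [completeHomog_cons_succ, completeHomog_zero]
    ring
  | succ d ih =>
    rw [completeHomog_cons_succ x (y :: l) d, completeHomog_cons_succ x l (d + 1),
      completeHomog_cons_succ y l (d + 1)]
    linear_combination x * ih

end CompleteHomog

section Vandermonde

open Matrix

variable {R : Type*} [CommRing R]

theorem det_vandermonde_succ {n : ℕ} (u : Fin (n + 1) → R) :
    (vandermonde u).det = (∏ i, (Fin.tail u i - u 0)) * (vandermonde (Fin.tail u)).det := by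
  simp [det_vandermonde, Fin.prod_univ_succ, Fin.prod_Ioi_succ, Fin.tail]

theorem det_vandermonde_comp_dvd {j k : ℕ} (u : Fin k → R) (f : Fin j ↪o Fin k) :
    (vandermonde (u ∘ f)).det ∣ (vandermonde u).det := by
  simp only [det_vandermonde, Function.comp_apply]
  calc ∏ a, ∏ b ∈ Finset.Ioi a, (u (f b) - u (f a))
      ∣ ∏ a, ∏ b ∈ Finset.Ioi (f a), (u b - u (f a)) := by
        refine Finset.prod_dvd_prod_of_dvd _ _ fun a _ => ?_
        have hsub : (Finset.Ioi a).map f.toEmbedding ⊆ Finset.Ioi (f a) := fun b hb => by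
          obtain ⟨c, hc, rfl⟩ := Finset.mem_map.1 hb
          simpa using hc
        simpa using Finset.prod_dvd_prod_of_subset _ _ (fun b => u b - u (f a)) hsub
    _ ∣ ∏ a, ∏ b ∈ Finset.Ioi a, (u b - u a) := by
        simpa using Finset.prod_dvd_prod_of_subset _ _ (fun a => ∏ b ∈ Finset.Ioi a, (u b - u a))
          (Finset.subset_univ (Finset.univ.map f.toEmbedding))

theorem completeHomog_ofFn_mul_det_vandermonde {j d : ℕ} (u : Fin (j + 1) → R)
    (hu : ∀ i, u i ^ (d + j) = 0) :
    completeHomog (List.ofFn u) d * (vandermonde u).det = 0 := by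
  induction j generalizing d with
  | zero => simpa [completeHomog_singleton] using hu 0
  | succ j ih =>
    cases u using Fin.consCases with | _ x u =>
    cases u using Fin.consCases with | _ y l =>
    have hpow : ∀ i, (Fin.cons x (Fin.cons y l) : Fin (j + 2) → R) i ^ (d + 1 + j) = 0 := by
      simpa only [add_assoc, add_comm 1 j] using hu
    have hx := ih (d := d + 1) (Fin.cons x l)
      (Fin.cases (hpow 0) fun i => hpow i.succ.succ)
    have hy := ih (d := d + 1) (Fin.cons y l) fun i => hpow i.succ
    have hxy := sub_mul_completeHomog_cons_cons x y (List.ofFn l) d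
    simp only [List.ofFn_cons, det_vandermonde_succ, Fin.tail_cons, Fin.cons_zero,
      Fin.prod_univ_succ, Fin.cons_succ] at hx hy ⊢
    linear_combination (-(∏ i, (l i - x)) * (∏ i, (l i - y)) * (vandermonde l).det) * hxy
      - (∏ i, (l i - y)) * hx + (∏ i, (l i - x)) * hy

theorem completeHomog_take_mul_det_vandermonde {k j d : ℕ} (hj : j < k) (u : Fin k → R)
    (hu : ∀ i, u i ^ (d + j) = 0) :
    completeHomog ((List.ofFn u).take (j + 1)) d * (vandermonde u).det = 0 := by
  obtain ⟨c, hc⟩ := det_vandermonde_comp_dvd u (Fin.castLEOrderEmb hj)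
  have hprefix : (List.ofFn u).take (j + 1) = List.ofFn (u ∘ Fin.castLEOrderEmb hj) :=
    (Fin.ofFn_take_eq_take_ofFn hj u).symm
  have hzero := completeHomog_ofFn_mul_det_vandermonde (u ∘ Fin.castLEOrderEmb hj) fun i => hu _
  rw [hprefix, hc, ← mul_assoc, hzero, zero_mul]

end Vandermonde

section NilpotentPowers

variable {B : Type*}

theorem pow_mul_pow_mul_add_pow_eq_zero [CommSemiring B] {x y : B} {m n a b d : ℕ}
    (hx : x ^ m = 0) (hy : y ^ n = 0) (h : m + n ≤ a + b + d + 1) :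
    x ^ a * y ^ b * (x + y) ^ d = 0 := by
  rw [add_pow, Finset.mul_sum]
  refine Finset.sum_eq_zero fun i hi => ?_
  have hid : i ≤ d := Finset.mem_range_succ_iff.1 hi
  calc x ^ a * y ^ b * (x ^ i * y ^ (d - i) * (d.choose i : B))
      = x ^ (a + i) * y ^ (b + (d - i)) * (d.choose i : B) := by ring
    _ = 0 := by
      obtain hm | hn : m ≤ a + i ∨ n ≤ b + (d - i) := by omega
      · simp [pow_eq_zero_of_le hm hx]
      · simp [pow_eq_zero_of_le hn hy]

variable [CommRing B] {x y : B}

theorem pow_mul_add_pow {a : ℕ} (hx : x ^ (a + 1) = 0) (y : B) (j : ℕ) :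
    x ^ a * (x + y) ^ j = x ^ a * y ^ j := by
  induction j with
  | zero => simp
  | succ j ih =>
    rw [pow_succ, ← mul_assoc, ih]
    linear_combination y ^ j * hx

theorem pow_mul_prod_sub {ι : Type*} {a : ℕ} (hx : x ^ (a + 1) = 0) (s : Finset ι) (c : ι → B) :
    x ^ a * ∏ i ∈ s, (c i - x) = x ^ a * ∏ i ∈ s, c i := by
  induction s using Finset.cons_induction with
  | empty => simp
  | cons i s hi ih =>
    rw [Finset.prod_cons, Finset.prod_cons]
    linear_combination (c i - x) * ih - (∏ i ∈ s, c i) * hx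

variable {p e s N : ℕ} [ExpChar B p]

theorem add_pow_two_mul_expChar_pow_sub_one (x y : B) :
    (x + y) ^ (2 * p ^ e - 1) = (x ^ p ^ e + y ^ p ^ e) * (x + y) ^ (p ^ e - 1) := by
  have hq : 0 < p ^ e := pow_pos (expChar_pos B p) e
  rw [← add_pow_expChar_pow, ← pow_add]
  congr 1
  omega

theorem pow_mul_pow_mul_add_pow_two_mul_expChar_pow_sub_one (hN : p ^ e + s = N)
    (hx : x ^ (N + 1) = 0) (hy : y ^ (N + 1) = 0) :
    x ^ s * y ^ s * (x + y) ^ (2 * p ^ e - 1) = x ^ N * y ^ (N - 1) + y ^ N * x ^ (N - 1) := by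
  have hq : 0 < p ^ e := pow_pos (expChar_pos B p) e
  have hxy := pow_mul_add_pow hx y (p ^ e - 1)
  have hyx := pow_mul_add_pow hy x (p ^ e - 1)
  have hpred : N - 1 = s + (p ^ e - 1) := by omega
  rw [add_comm y x] at hyx
  rw [add_pow_two_mul_expChar_pow_sub_one, hpred, pow_add _ s, pow_add _ s]
  subst hN
  linear_combination y ^ s * hxy + x ^ s * hyx

theorem pow_mul_pow_succ_mul_add_pow_two_mul_expChar_pow_sub_one (hN : p ^ e + s = N)
    (hx : x ^ (N + 1) = 0) (hy : y ^ (N + 1) = 0) :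
    x ^ s * y ^ (s + 1) * (x + y) ^ (2 * p ^ e - 1) = x ^ N * y ^ N := by
  have hN0 : N ≠ 0 := by have := pow_pos (expChar_pos B p) e; omega
  linear_combination y * pow_mul_pow_mul_add_pow_two_mul_expChar_pow_sub_one hN hx hy +
    x ^ N * pow_sub_one_mul hN0 y + x ^ (N - 1) * hy

end NilpotentPowers

section ZeroDivisorProd

open Matrix

/-- The product `(z₁ ⋯ z_k) ^ (2q - 1) · z_{k+1} ^ (2q - 2)`, for an arbitrary family `z` in place
of the zero-divisors of `R(k+1,m) ⊗ R(k+1,m)`. -/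
def zeroDivisorProd {B : Type*} [CommMonoid B] {k : ℕ} (q : ℕ) (z : Fin (k + 1) → B) : B :=
  (∏ i : Fin k, z i.castSucc) ^ (2 * q - 1) * z (Fin.last k) ^ (2 * q - 2)

theorem zeroDivisorProd_succ {B : Type*} [CommMonoid B] {k : ℕ} (q : ℕ) (z : Fin (k + 2) → B) :
    zeroDivisorProd q z = z 0 ^ (2 * q - 1) * zeroDivisorProd q (Fin.tail z) := by
  simp [zeroDivisorProd, Fin.prod_univ_succ, Fin.tail, mul_pow, mul_assoc]

theorem map_zeroDivisorProd {B C F : Type*} [CommMonoid B] [CommMonoid C] [FunLike F B C]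
    [MonoidHomClass F B C] (f : F) {k : ℕ} (q : ℕ) (z : Fin (k + 1) → B) :
    f (zeroDivisorProd q z) = zeroDivisorProd q (f ∘ z) := by
  simp [zeroDivisorProd]

variable {B : Type*} [CommRing B] {p e r s N : ℕ} [ExpChar B p]

theorem zeroDivisorProd_mul_det_vandermonde_dvd_of_fin_two (hN : p ^ e + s = N) {u v : Fin 2 → B}
    (hu : ∀ i, u i ^ (N + 1) = 0) (hv : ∀ i, v i ^ (N + 1) = 0) :
    (∏ i, u i) ^ s * (∏ i, v i) ^ s * zeroDivisorProd (p ^ e) (u + v) *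
        ((vandermonde u).det * (vandermonde v).det) ∣
      (∏ i, u i) ^ N * (∏ i, v i) ^ N := by
  have hq : 0 < p ^ e := pow_pos (expChar_pos B p) e
  have hN0 : N ≠ 0 := by omega
  have hfirst : u 0 ^ s * v 0 ^ s * (u 0 + v 0) ^ (2 * p ^ e - 1) * ((u 1 - u 0) * (v 1 - v 0)) =
      u 1 * v 1 * (u 0 ^ N * v 0 ^ (N - 1) + v 0 ^ N * u 0 ^ (N - 1)) -
        u 0 ^ N * v 0 ^ N * (u 1 + v 1) := by
    rw [pow_mul_pow_mul_add_pow_two_mul_expChar_pow_sub_one hN (hu 0) (hv 0)]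
    linear_combination (v 0 - v 1) * v 0 ^ (N - 1) * hu 0 + (u 0 - u 1) * u 0 ^ (N - 1) * hv 0
      - u 1 * u 0 ^ N * pow_sub_one_mul hN0 (v 0) - v 1 * v 0 ^ N * pow_sub_one_mul hN0 (u 0)
  -- The degree in `u 1` and `v 1` exceeds `2 * N`.
  have hvanish : u 1 ^ (s + 2) * v 1 ^ (s + 1) * (u 1 + v 1) ^ (2 * p ^ e - 2) = 0 :=
    pow_mul_pow_mul_add_pow_eq_zero (hu 1) (hv 1) (by omega)
  have htop : v 1 ^ s * u 1 ^ (s + 1) * (u 1 + v 1) ^ (2 * p ^ e - 2) * (u 1 + v 1) =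
      v 1 ^ N * u 1 ^ N := by
    have hexp : 2 * p ^ e - 2 + 1 = 2 * p ^ e - 1 := by omega
    rw [mul_assoc, ← pow_succ, hexp, add_comm (u 1),
      pow_mul_pow_succ_mul_add_pow_two_mul_expChar_pow_sub_one hN (hv 1) (hu 1)]
  refine ⟨-u 1, ?_⟩
  simp only [zeroDivisorProd, det_vandermonde_succ, det_fin_zero, Fin.prod_univ_two,
    Fin.prod_univ_one, Fin.prod_univ_zero, Fin.tail, Pi.add_apply, Fin.castSucc_zero,
    Fin.succ_zero_eq_one, Fin.reduceLast, mul_one, mul_pow]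
  linear_combination u 1 ^ (s + 1) * v 1 ^ s * (u 1 + v 1) ^ (2 * p ^ e - 2) * hfirst
    - u 0 ^ N * v 0 ^ N * htop
    + (u 0 ^ N * v 0 ^ (N - 1) + v 0 ^ N * u 0 ^ (N - 1)) * hvanish

/-- The powers with exponent `s` make the induction go through: splitting off the first pair of
variables raises `s` by one. -/
theorem zeroDivisorProd_mul_det_vandermonde_dvd (hN : p ^ e + r + s = N) {u v : Fin (r + 2) → B}
    (hu : ∀ i, u i ^ (N + 1) = 0) (hv : ∀ i, v i ^ (N + 1) = 0) :
    (∏ i, u i) ^ s * (∏ i, v i) ^ s * zeroDivisorProd (p ^ e) (u + v) *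
        ((vandermonde u).det * (vandermonde v).det) ∣
      (∏ i, u i) ^ N * (∏ i, v i) ^ N := by
  induction r generalizing s with
  | zero => exact zeroDivisorProd_mul_det_vandermonde_dvd_of_fin_two hN hu hv
  | succ r ih =>
    have htail := ih (s := s + 1) (by omega) (u := Fin.tail u) (v := Fin.tail v)
      (fun i => hu i.succ) (fun i => hv i.succ)
    have hpair := pow_mul_pow_succ_mul_add_pow_two_mul_expChar_pow_sub_one (p := p) (e := e)
      (s := r + 1 + s) (by omega) (hu 0) (hv 0)
    have hU := pow_mul_prod_sub (hu 0) Finset.univ (Fin.tail u)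
    have hV := pow_mul_prod_sub (hv 0) Finset.univ (Fin.tail v)
    have hprod (w : Fin (r + 3) → B) : ∏ i, w i = w 0 * ∏ i, Fin.tail w i := Fin.prod_univ_succ w
    have hz : zeroDivisorProd (p ^ e) (u + v) = (u 0 + v 0) ^ (2 * p ^ e - 1) *
        zeroDivisorProd (p ^ e) (Fin.tail u + Fin.tail v) := zeroDivisorProd_succ _ _
    rw [hz, det_vandermonde_succ u, det_vandermonde_succ v, hprod u, hprod v]
    set U := ∏ i, Fin.tail u i
    set V := ∏ i, Fin.tail v i
    set Z := zeroDivisorProd (p ^ e) (Fin.tail u + Fin.tail v)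
    set Δ := (vandermonde (Fin.tail u)).det * (vandermonde (Fin.tail v)).det with hΔ
    refine .trans (Dvd.intro (u 0 ^ (r + 1) * v 0 ^ (r + 2)) ?_) <|
      calc u 0 ^ N * v 0 ^ N * (U ^ (s + 1) * V ^ (s + 1) * Z * Δ)
          ∣ u 0 ^ N * v 0 ^ N * (U ^ N * V ^ N) := mul_dvd_mul_left _ htail
        _ = (u 0 * U) ^ N * (v 0 * V) ^ N := by ring
    rw [hΔ]
    linear_combination
      U ^ s * V ^ s * Z * Δ * (∏ i, (Fin.tail u i - u 0)) * (∏ i, (Fin.tail v i - v 0)) * hpair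
        + U ^ s * V ^ s * Z * Δ * v 0 ^ N * (∏ i, (Fin.tail v i - v 0)) * hU
        + U ^ s * V ^ s * Z * Δ * u 0 ^ N * U * hV

end ZeroDivisorProd

section TruncatedPolynomial

open MvPolynomial

theorem prod_X_pow_notMem_span_X_pow {σ R : Type*} [Fintype σ] [CommSemiring R] [Nontrivial R]
    (N : ℕ) :
    (∏ i : σ, (X i : MvPolynomial σ R)) ^ N ∉ Ideal.span (Set.range fun i => X i ^ (N + 1)) := by
  classical
  have hprod : (∏ i : σ, (X i : MvPolynomial σ R)) ^ N =
      monomial (∑ i : σ, Finsupp.single i N) 1 := by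
    rw [monomial_sum_one, ← Finset.prod_pow]
    simp only [X_pow_eq_monomial]
  have hrange : (Set.range fun i : σ => (X i : MvPolynomial σ R) ^ (N + 1)) =
      (fun s => monomial s (1 : R)) '' Set.range fun i => Finsupp.single i (N + 1) := by
    rw [← Set.range_comp]
    simp only [X_pow_eq_monomial, Function.comp_def]
  rw [hprod, hrange, mem_ideal_span_monomial_image]
  intro h
  obtain ⟨_, ⟨i, rfl⟩, hi⟩ := h (∑ i : σ, Finsupp.single i N) (by simp [coeff_monomial])
  simpa [Finsupp.finsetSum_apply, Finsupp.single_apply] using hi i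

/-- The truncated polynomial ring `R[x_i : i ∈ σ] / (x_i ^ n)`, in which the nonvanishing of a
product of zero-divisors is tested. -/
abbrev TruncatedPolynomial (σ R : Type*) [CommRing R] (n : ℕ) : Type _ :=
  MvPolynomial σ R ⧸ Ideal.span (Set.range fun i : σ => (X i : MvPolynomial σ R) ^ n)

variable {σ R : Type*} [CommRing R]

/-- The class of the variable `x_i` in the truncated polynomial ring. -/
noncomputable def truncatedX (n : ℕ) (i : σ) : TruncatedPolynomial σ R n :=
  Ideal.Quotient.mk _ (X i)

theorem truncatedX_pow_eq_zero (n : ℕ) (i : σ) :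
    (truncatedX n i : TruncatedPolynomial σ R n) ^ n = 0 :=
  Ideal.Quotient.eq_zero_iff_mem.2 (Ideal.subset_span ⟨i, rfl⟩)

theorem prod_truncatedX_pow_ne_zero [Fintype σ] [Nontrivial R] (N : ℕ) :
    (∏ i, (truncatedX (N + 1) i : TruncatedPolynomial σ R (N + 1))) ^ N ≠ 0 := by
  have h := prod_X_pow_notMem_span_X_pow (σ := σ) (R := R) N
  rwa [← Ideal.Quotient.eq_zero_iff_mem, map_pow, map_prod] at h

end TruncatedPolynomial

section FlagRing

open Matrix MvPolynomial

theorem exists_algHom_flagRing {C : Type*} [CommRing C] [Algebra (ZMod 2) C] {k m : ℕ}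
    (c : Fin k → C)
    (hc : ∀ i, 1 ≤ i → i ≤ k → completeHomog ((List.ofFn c).take (k + 1 - i)) (m + i) = 0) :
    ∃ f : FlagRing k m →ₐ[ZMod 2] C, ∀ j, f (xGen k m j) = c j := by
  have hle : flagIdeal k m ≤
      RingHom.ker (aeval c : MvPolynomial (Fin k) (ZMod 2) →ₐ[ZMod 2] C) := by
    refine Ideal.span_le.2 ?_
    rintro _ ⟨i, hi, hik, rfl⟩
    simpa [map_completeHomog, List.map_take, List.ofFn_eq_map, Function.comp_def] using hc i hi hik
  exact ⟨Ideal.Quotient.liftₐ (flagIdeal k m) (aeval c) hle, fun j => aeval_X c j⟩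

variable {B : Type*} [CommRing B] [Algebra (ZMod 2) B] {k m : ℕ}

theorem exists_algHom_flagRing_quotient_annihilator {u : Fin k → B} (hu : ∀ i, u i ^ (m + k) = 0)
    {D : B} (hD : (vandermonde u).det ∣ D) :
    ∃ f : FlagRing k m →ₐ[ZMod 2] B ⧸ (Ideal.span {D}).annihilator,
      ∀ i, f (xGen k m i) = Ideal.Quotient.mk _ (u i) := by
  refine exists_algHom_flagRing _ fun i hi hik => ?_
  have hann : completeHomog ((List.ofFn u).take (k + 1 - i)) (m + i) * D = 0 := by
    obtain ⟨c, rfl⟩ := hD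
    have hexp : m + i + (k - i) = m + k := by omega
    rw [Nat.sub_add_comm hik, ← mul_assoc, completeHomog_take_mul_det_vandermonde (by omega) u
      (fun j => hexp ▸ hu j), zero_mul]
  rw [← smul_eq_mul, ← Submodule.mem_annihilator_span_singleton,
    ← Ideal.Quotient.eq_zero_iff_mem, map_completeHomog, List.map_take, List.map_ofFn] at hann
  exact hann

theorem zeroDivisorProd_add_mul_eq_zero {q : ℕ} {u v : Fin (k + 1) → B}
    (hu : ∀ i, u i ^ (m + (k + 1)) = 0) (hv : ∀ i, v i ^ (m + (k + 1)) = 0)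
    (h : zeroDivisorProd q (zGen (k + 1) m) = 0) :
    zeroDivisorProd q (u + v) * ((vandermonde u).det * (vandermonde v).det) = 0 := by
  obtain ⟨f, hf⟩ := exists_algHom_flagRing_quotient_annihilator hu
    (dvd_mul_right (vandermonde u).det (vandermonde v).det)
  obtain ⟨g, hg⟩ := exists_algHom_flagRing_quotient_annihilator hv
    (dvd_mul_left (vandermonde v).det (vandermonde u).det)
  have hz : Algebra.TensorProduct.productMap f g ∘ zGen (k + 1) m =
      Ideal.Quotient.mk _ ∘ (u + v) := by
    ext i
    simp [zGen, hf, hg]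
  have hmap := congrArg (Algebra.TensorProduct.productMap f g) h
  rw [map_zero, map_zeroDivisorProd, hz, ← map_zeroDivisorProd,
    Ideal.Quotient.eq_zero_iff_mem, Submodule.mem_annihilator_span_singleton] at hmap
  exact hmap

theorem zeroDivisorProd_zGen_ne_zero {r e : ℕ} (hm : 2 ^ e ≤ m + 1) :
    zeroDivisorProd (2 ^ e) (zGen (r + 2) m) ≠ 0 := by
  intro hzero
  obtain ⟨s, hs⟩ := Nat.exists_eq_add_of_le hm
  obtain ⟨N, hN⟩ : ∃ N, 2 ^ e + r + s = N := ⟨_, rfl⟩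
  have hexp : N + 1 = m + (r + 1 + 1) := by omega
  let B := TruncatedPolynomial (Fin (r + 2) ⊕ Fin (r + 2)) (ZMod 2) (N + 1)
  let u : Fin (r + 2) → B := fun i => truncatedX (N + 1) (Sum.inl i)
  let v : Fin (r + 2) → B := fun i => truncatedX (N + 1) (Sum.inr i)
  have hu : ∀ i, u i ^ (N + 1) = 0 := fun i => truncatedX_pow_eq_zero _ _
  have hv : ∀ i, v i ^ (N + 1) = 0 := fun i => truncatedX_pow_eq_zero _ _
  have htop : (∏ i, u i) ^ N * (∏ i, v i) ^ N ≠ 0 := by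
    rw [← mul_pow, ← Fintype.prod_sum_type]
    exact prod_truncatedX_pow_ne_zero N
  have : Nontrivial B := nontrivial_of_ne _ _ htop
  have : ExpChar B 2 := expChar_of_injective_algebraMap (algebraMap (ZMod 2) B).injective 2
  have hdvd := zeroDivisorProd_mul_det_vandermonde_dvd hN hu hv
  rw [mul_assoc, zeroDivisorProd_add_mul_eq_zero (hexp ▸ hu) (hexp ▸ hv) hzero, mul_zero,
    zero_dvd_iff] at hdvd
  exact htop hdvd

end FlagRing

theorem statement8_general (k e m : ℕ) (hk : 2 ≤ k) (hm : 2 ^ e ≤ m + 1) :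
    (∏ j ∈ Finset.univ.filter (fun j : Fin k => j.val < k - 1),
        zGen k m j) ^ (2 ^ (e + 1) - 1) *
      zGen k m ⟨k - 1, by omega⟩ ^ (2 ^ (e + 1) - 2) ≠ 0 := by
  obtain ⟨r, rfl⟩ : ∃ r, k = r + 2 := ⟨k - 2, by omega⟩
  have hprod : ∏ j ∈ Finset.univ.filter (fun j : Fin (r + 2) => j.val < r + 2 - 1),
      zGen (r + 2) m j = ∏ j : Fin (r + 1), zGen (r + 2) m j.castSucc := by
    rw [Finset.prod_filter, Fin.prod_univ_castSucc]
    simp [Nat.lt_succ_iff.1 (Fin.is_lt _)]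
  rw [hprod, pow_succ' 2 e]
  exact zeroDivisorProd_zGen_ne_zero hm

/-- for `k ≥ 2` and `e ≥ 1`,
`(z_1 ⋯ z_{k-1})^{2^{e+1}-1} · z_k^{2^{e+1}-2} ≠ 0` in `R(k, 2^e-1) ⊗ R(k, 2^e-1)`. -/
theorem statement8 (k e : ℕ) (hk : 2 ≤ k) (he : 1 ≤ e) :
    (∏ j ∈ Finset.univ.filter (fun j : Fin k => j.val < k - 1),
        zGen k (2 ^ e - 1) j) ^ (2 ^ (e + 1) - 1) *
      zGen k (2 ^ e - 1) ⟨k - 1, by omega⟩ ^ (2 ^ (e + 1) - 2) ≠ 0 :=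
  statement8_general k e (2 ^ e - 1) hk (by omega)
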